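/- Let G be a finite simple graph on the vertex set {x_1,…,x_n} (n ≥ 1) without isolated vertices, let c(G) denote the number of connected components of G, and let I(G) ⊂ S = K[x_1,…,x_n] be its edge ideal. Then there exists k_0 such that for all k ≥ k_0, v(I(G)^k) = 2k + (c(G) − 2). -/

import Mathlib

open MvPolynomial

noncomputable section

/-- The set of associated primes `Ass(L)` of the quotient by an ideal `L`. -/
def assOf {A : Type} [CommRing A] (L : Ideal A) : Set (Ideal A) :=
  associatedPrimes A (A ⧸ L)

/-- `𝔄` is the stable value `Ass^∞(L)` of `Ass(L^k)` for all large `k`. -/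
def IsStableAssValue {A : Type} [CommRing A] (L : Ideal A) (𝔄 : Set (Ideal A)) : Prop :=
  ∃ N : ℕ, ∀ k : ℕ, N ≤ k → assOf (L ^ k) = 𝔄

/-- `Ass^*(L) = ⋃_{k ≥ 1} Ass(L^k)`. -/
def assStar {A : Type} [CommRing A] (L : Ideal A) : Set (Ideal A) :=
  {p | ∃ k : ℕ, 1 ≤ k ∧ p ∈ assOf (L ^ k)}

/-- The local v-number `v_p(L)`: the least degree of a homogeneous `f` with `(L : f) = p`. -/
def vnum {σ K : Type} [Field K] (L p : Ideal (MvPolynomial σ K)) : ℕ :=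
  sInf {d : ℕ | ∃ f : MvPolynomial σ K, f.IsHomogeneous d ∧ L.colon (Ideal.span {f}) = p}

/-- The v-number `v(L) = min_{p ∈ Ass(L)} v_p(L)`. -/
def vnumber {σ K : Type} [Field K] (L : Ideal (MvPolynomial σ K)) : ℕ :=
  sInf {d : ℕ | ∃ p ∈ assOf L, ∃ f : MvPolynomial σ K,
    f.IsHomogeneous d ∧ L.colon (Ideal.span {f}) = p}

/-- The initial degree `α(L)`: the least `d` such that `L` contains a nonzero
homogeneous element of degree `d`. -/
def alphaDeg {σ K : Type} [Field K] (L : Ideal (MvPolynomial σ K)) : ℕ :=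
  sInf {d : ℕ | ∃ f ∈ L, f ≠ 0 ∧ MvPolynomial.IsHomogeneous f d}

/-- A graded (homogeneous) ideal: one containing all homogeneous components
of each of its elements. -/
def IsGradedIdeal {σ K : Type} [Field K] (I : Ideal (MvPolynomial σ K)) : Prop :=
  ∀ f ∈ I, ∀ d : ℕ, homogeneousComponent d f ∈ I

/-- A monomial ideal: an ideal generated by monomials. -/
def IsMonomialIdeal {σ K : Type} [Field K] (I : Ideal (MvPolynomial σ K)) : Prop :=
  ∃ G : Set (σ →₀ ℕ), I = Ideal.span ((fun a => (monomial a (1 : K))) '' G)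

/-!
A monomial `x^a` lies in `I(G)^k` exactly when `k ≤ ord a`, where `ord a` is the largest number of
edges, with repetition, whose product divides `x^a`. The order is additive over the connected
components, and multiplying by one variable raises it by at most one.

If `(I(G)^k : f)` is prime, it contains `I(G)`, hence a variable of each component. So some monomial
`x^a` of `f` has order `k - 1`, and in each component one variable raises its order. The part
of `x^a` in a component therefore has degree at least one more than twice its order; summing over
the components gives `deg f ≥ 2(k - 1) + c(G)`.

The bound is attained by the product of one root per component and `k - 1` edges. A vertex joined to
its root by an odd walk raises the order as soon as the edges contain enough copies of the even
steps of that walk, which can then be traded for the odd steps. The other vertices do not: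
they have weight `0` for a weighting of the vertices that has total `2` on every edge and is at most
`1` on the roots. So the colon ideal is generated by the former vertices and is prime.
-/

lemma sum_filter_fiber {α ι M : Type*} [AddCommMonoid M] [Fintype ι] [DecidableEq ι] (f : α → ι)
    (a : α →₀ M) : ∑ i, a.filter (f · = i) = a := by
  ext x
  simp [Finsupp.finsetSum_apply, Finsupp.filter_apply]

section EdgeOrder

variable {V : Type*} {G : SimpleGraph V}

/-- The exponent vector of the quadric `x_u x_v` attached to a dart from `u` to `v`. -/
def dartExp (d : G.Dart) : V →₀ ℕ :=
  Finsupp.single d.fst 1 + Finsupp.single d.snd 1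

/-- The exponent vector of the product of edges in which each dart `d` occurs `T d` times. Edges are
represented by darts, so that an edge is counted through either of its orientations. -/
def edgeSum : (G.Dart →₀ ℕ) →ₗ[ℕ] (V →₀ ℕ) :=
  Finsupp.linearCombination ℕ dartExp

lemma edgeSum_single (d : G.Dart) (n : ℕ) : edgeSum (Finsupp.single d n) = n • dartExp d := by
  rw [edgeSum, Finsupp.linearCombination_single]

lemma edgeSum_apply_eq_zero {T : G.Dart →₀ ℕ} {v : V} (h : ∀ d ∈ T.support, dartExp d v = 0) :
    edgeSum T v = 0 := by
  rw [edgeSum, Finsupp.linearCombination_apply, Finsupp.sum, Finsupp.finsetSum_apply]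
  exact Finset.sum_eq_zero fun d hd => by rw [Finsupp.smul_apply, h d hd, smul_zero]

lemma weight_edgeSum {w : V → ℕ} {c : ℕ} (hw : ∀ u v, G.Adj u v → w u + w v = c)
    (T : G.Dart →₀ ℕ) : Finsupp.weight w (edgeSum T) = c * T.degree := by
  induction T using Finsupp.induction_linear with
  | zero => simp
  | add S T hS hT => simp only [map_add, hS, hT, mul_add]
  | single d n =>
    rw [edgeSum_single, map_nsmul, dartExp, map_add, Finsupp.weight_single, Finsupp.weight_single,
      one_smul, one_smul, hw _ _ d.adj, Finsupp.degree_single, smul_eq_mul, mul_comm]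

lemma degree_edgeSum (T : G.Dart →₀ ℕ) : (edgeSum T).degree = 2 * T.degree := by
  rw [Finsupp.degree_eq_weight_one]
  exact weight_edgeSum (fun _ _ _ => rfl) T

variable (G) in
/-- The edge order of an exponent vector: the largest number of edges, with repetition, whose
product divides the monomial. It is the largest `k` such that the monomial lies in the `k`-th power
of the edge ideal, see `mem_edgeIdeal_pow`. -/
def edgeOrder (a : V →₀ ℕ) : ℕ :=
  sSup (Finsupp.degree '' {T : G.Dart →₀ ℕ | edgeSum T ≤ a})

lemma bddAbove_degree_edgeSum_le (a : V →₀ ℕ) :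
    BddAbove (Finsupp.degree '' {T : G.Dart →₀ ℕ | edgeSum T ≤ a}) := by
  refine ⟨a.degree, ?_⟩
  rintro _ ⟨T, hT, rfl⟩
  have h := Finsupp.degree_mono hT
  rw [degree_edgeSum] at h
  lia

lemma degree_le_edgeOrder {T : G.Dart →₀ ℕ} {a : V →₀ ℕ} (h : edgeSum T ≤ a) :
    T.degree ≤ edgeOrder G a :=
  le_csSup (bddAbove_degree_edgeSum_le a) ⟨T, h, rfl⟩

variable (G) in
lemma exists_edgeSum_le_degree_eq_edgeOrder (a : V →₀ ℕ) :
    ∃ T : G.Dart →₀ ℕ, edgeSum T ≤ a ∧ T.degree = edgeOrder G a :=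
  Nat.sSup_mem (Set.Nonempty.image _ ⟨0, (map_zero edgeSum).trans_le zero_le⟩)
    (bddAbove_degree_edgeSum_le a)

lemma le_edgeOrder_iff {k : ℕ} {a : V →₀ ℕ} :
    k ≤ edgeOrder G a ↔ ∃ T : G.Dart →₀ ℕ, T.degree = k ∧ edgeSum T ≤ a := by
  constructor
  · intro hk
    obtain ⟨T, hTa, hT⟩ := exists_edgeSum_le_degree_eq_edgeOrder G a
    obtain ⟨S, hST, hS⟩ := Finsupp.exists_le_degree_eq T k (hT ▸ hk)
    obtain ⟨U, rfl⟩ := le_iff_exists_add.mp hST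
    exact ⟨S, hS, le_self_add.trans (map_add edgeSum S U ▸ hTa)⟩
  · rintro ⟨T, rfl, hTa⟩
    exact degree_le_edgeOrder hTa

lemma edgeOrder_mono : Monotone (edgeOrder G) := fun a b hab => by
  obtain ⟨T, hTa, hT⟩ := exists_edgeSum_le_degree_eq_edgeOrder G a
  exact hT ▸ degree_le_edgeOrder (hTa.trans hab)

lemma mul_edgeOrder_le_weight {w : V → ℕ} {c : ℕ} (hw : ∀ u v, G.Adj u v → w u + w v = c)
    (a : V →₀ ℕ) : c * edgeOrder G a ≤ Finsupp.weight w a := by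
  obtain ⟨T, hTa, hT⟩ := exists_edgeSum_le_degree_eq_edgeOrder G a
  obtain ⟨b, hb⟩ := le_iff_exists_add.mp hTa
  rw [← hT, ← weight_edgeSum hw T, hb, map_add]
  exact Nat.le_add_right _ _

lemma two_mul_edgeOrder_le_degree (a : V →₀ ℕ) : 2 * edgeOrder G a ≤ a.degree := by
  rw [Finsupp.degree_eq_weight_one]
  exact mul_edgeOrder_le_weight (w := fun _ => 1) (c := 2) (fun _ _ _ => rfl) a

lemma edgeOrder_single_add_le (v : V) (a : V →₀ ℕ) :
    edgeOrder G (Finsupp.single v 1 + a) ≤ edgeOrder G a + 1 := by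
  classical
  obtain ⟨T, hTa, hT⟩ := exists_edgeSum_le_degree_eq_edgeOrder G (Finsupp.single v 1 + a)
  rw [← hT]
  by_cases h : ∃ d ∈ T.support, dartExp d v ≠ 0
  · obtain ⟨d, hd, hdv⟩ := h
    obtain ⟨U, rfl⟩ := le_iff_exists_add.mp <| Finsupp.single_le_iff.mpr <|
      Nat.one_le_iff_ne_zero.mpr <| Finsupp.mem_support_iff.mp hd
    obtain ⟨b, hb⟩ := le_iff_exists_add.mp <| Finsupp.single_le_iff.mpr <|
      Nat.one_le_iff_ne_zero.mpr hdv
    rw [map_add, edgeSum_single, one_smul, hb, add_assoc, add_le_add_iff_left] at hTa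
    rw [map_add, Finsupp.degree_single, add_comm, add_le_add_iff_right]
    exact degree_le_edgeOrder (le_add_self.trans hTa)
  · push Not at h
    refine (degree_le_edgeOrder fun u => ?_).trans (Nat.le_succ _)
    obtain rfl | hu := eq_or_ne u v
    · rw [edgeSum_apply_eq_zero h]
      exact Nat.zero_le _
    · simpa [Finsupp.single_apply, hu.symm] using hTa u

end EdgeOrder

section Components

variable {V : Type*} {G : SimpleGraph V}

open scoped Classical in
/-- The part of an exponent vector supported on a connected component, over which edge orders
add up. -/
def compPart (l : G.ConnectedComponent) : (V →₀ ℕ) →+ (V →₀ ℕ) :=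
  Finsupp.filterAddHom (G.connectedComponentMk · = l)

lemma compPart_apply_eq_zero {a : V →₀ ℕ} {v : V} (h : a v = 0) (l : G.ConnectedComponent) :
    compPart l a v = 0 := by
  classical
  exact (Finsupp.filter_apply _ _ _).trans (by rw [h, ite_self])

lemma compPart_single {l : G.ConnectedComponent} {v : V} (h : G.connectedComponentMk v = l)
    (n : ℕ) : compPart l (Finsupp.single v n) = Finsupp.single v n := by
  classical
  exact Finsupp.filter_single_of_pos _ h

lemma compPart_single_of_ne {l : G.ConnectedComponent} {v : V} (h : G.connectedComponentMk v ≠ l)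
    (n : ℕ) : compPart l (Finsupp.single v n) = 0 := by
  classical
  exact Finsupp.filter_single_of_neg _ h

open scoped Classical in
lemma compPart_edgeSum (l : G.ConnectedComponent) (T : G.Dart →₀ ℕ) :
    compPart l (edgeSum T) = edgeSum (T.filter fun d => G.connectedComponentMk d.fst = l) := by
  induction T using Finsupp.induction_linear with
  | zero => rw [map_zero, map_zero, Finsupp.filter_zero, map_zero]
  | add S T hS hT => simp only [map_add, hS, hT, Finsupp.filter_add]
  | single d n =>
    have hd : G.connectedComponentMk d.snd = G.connectedComponentMk d.fst :=
      SimpleGraph.ConnectedComponent.sound d.adj.symm.reachable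
    rw [edgeSum_single, map_nsmul, dartExp, map_add]
    by_cases h : G.connectedComponentMk d.fst = l
    · rw [Finsupp.filter_single_of_pos (fun d : G.Dart => G.connectedComponentMk d.fst = l) h,
        compPart_single h, compPart_single (hd.trans h), edgeSum_single, dartExp]
    · rw [Finsupp.filter_single_of_neg (fun d : G.Dart => G.connectedComponentMk d.fst = l) h,
        compPart_single_of_ne h, compPart_single_of_ne (hd.trans_ne h), map_zero, add_zero,
        smul_zero]

open scoped Classical in
lemma sum_compPart [Fintype G.ConnectedComponent] (a : V →₀ ℕ) :
    ∑ l : G.ConnectedComponent, compPart l a = a :=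
  sum_filter_fiber G.connectedComponentMk a

lemma edgeOrder_eq_sum_compPart [Fintype G.ConnectedComponent] (a : V →₀ ℕ) :
    edgeOrder G a = ∑ l : G.ConnectedComponent, edgeOrder G (compPart l a) := by
  classical
  apply le_antisymm
  · obtain ⟨T, hTa, hT⟩ := exists_edgeSum_le_degree_eq_edgeOrder G a
    rw [← hT, ← sum_filter_fiber (fun d : G.Dart => G.connectedComponentMk d.fst) T, map_sum]
    refine Finset.sum_le_sum fun l _ => degree_le_edgeOrder ?_
    obtain ⟨b, rfl⟩ := le_iff_exists_add.mp hTa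
    rw [map_add, compPart_edgeSum]
    exact le_self_add
  · choose T hTa hT using fun l : G.ConnectedComponent =>
      exists_edgeSum_le_degree_eq_edgeOrder G (compPart l a)
    simp only [← hT]
    rw [← map_sum]
    refine degree_le_edgeOrder ?_
    rw [map_sum]
    exact (Finset.sum_le_sum fun l _ => hTa l).trans_eq (sum_compPart a)

lemma two_mul_edgeOrder_compPart_lt_degree [Finite G.ConnectedComponent] {v : V} {a : V →₀ ℕ}
    (h : edgeOrder G a < edgeOrder G (Finsupp.single v 1 + a)) :
    2 * edgeOrder G (compPart (G.connectedComponentMk v) a) <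
      (compPart (G.connectedComponentMk v) a).degree := by
  have := Fintype.ofFinite G.ConnectedComponent
  rw [edgeOrder_eq_sum_compPart a, edgeOrder_eq_sum_compPart (Finsupp.single v 1 + a)] at h
  obtain ⟨l, -, hl⟩ := Finset.exists_lt_of_sum_lt h
  obtain rfl : G.connectedComponentMk v = l := by
    by_contra hvl
    rw [map_add, compPart_single_of_ne hvl, zero_add] at hl
    exact lt_irrefl _ hl
  rw [map_add, compPart_single rfl] at hl
  have hle := two_mul_edgeOrder_le_degree (G := G)
    (Finsupp.single v 1 + compPart (G.connectedComponentMk v) a)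
  rw [map_add, Finsupp.degree_single] at hle
  lia

lemma two_mul_edgeOrder_add_card_le_degree [Fintype G.ConnectedComponent] {a : V →₀ ℕ}
    (h : ∀ l : G.ConnectedComponent, ∃ v, G.connectedComponentMk v = l ∧
      edgeOrder G a < edgeOrder G (Finsupp.single v 1 + a)) :
    2 * edgeOrder G a + Fintype.card G.ConnectedComponent ≤ a.degree := calc
  2 * edgeOrder G a + Fintype.card G.ConnectedComponent
      = ∑ l : G.ConnectedComponent, (2 * edgeOrder G (compPart l a) + 1) := by
        rw [edgeOrder_eq_sum_compPart, Finset.sum_add_distrib, Finset.mul_sum,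
          Fintype.card_eq_sum_ones]
  _ ≤ ∑ l : G.ConnectedComponent, (compPart l a).degree := by
        refine Finset.sum_le_sum fun l _ => ?_
        obtain ⟨v, rfl, hv⟩ := h l
        exact two_mul_edgeOrder_compPart_lt_degree hv
  _ = a.degree := by rw [← map_sum, sum_compPart]

lemma edgeOrder_add_edgeSum_le [Finite G.ConnectedComponent] {w : V → ℕ}
    (hw : ∀ u v, G.Adj u v → w u + w v = 2) {a : V →₀ ℕ}
    (ha : ∀ l : G.ConnectedComponent, Finsupp.weight w (compPart l a) ≤ 1) (S : G.Dart →₀ ℕ) :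
    edgeOrder G (a + edgeSum S) ≤ S.degree := by
  classical
  have := Fintype.ofFinite G.ConnectedComponent
  have hS : S.degree =
      ∑ l, (S.filter fun d : G.Dart => G.connectedComponentMk d.fst = l).degree := by
    rw [← map_sum, sum_filter_fiber fun d : G.Dart => G.connectedComponentMk d.fst]
  rw [edgeOrder_eq_sum_compPart, hS]
  refine Finset.sum_le_sum fun l _ => ?_
  have h := mul_edgeOrder_le_weight hw (compPart l (a + edgeSum S))
  rw [map_add, compPart_edgeSum, map_add, weight_edgeSum hw] at h
  have := ha l
  rw [map_add, compPart_edgeSum]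
  lia

end Components

section OddWalks

variable {V : Type*} {G : SimpleGraph V}

lemma exists_edgeSum_of_walk {u v : V} (p : G.Walk u v) :
    (Even p.length → ∃ S T : G.Dart →₀ ℕ, T.degree = S.degree ∧
      Finsupp.single u 1 + edgeSum S = Finsupp.single v 1 + edgeSum T) ∧
    (Odd p.length → ∃ S T : G.Dart →₀ ℕ, T.degree = S.degree + 1 ∧
      Finsupp.single u 1 + Finsupp.single v 1 + edgeSum S = edgeSum T) := by
  induction p with
  | nil => exact ⟨fun _ => ⟨0, 0, rfl, rfl⟩, fun h => absurd h (by simp)⟩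
  | @cons u w v huw p ih =>
    rw [SimpleGraph.Walk.length_cons, Nat.even_add_one, Nat.not_even_iff_odd, Nat.odd_add_one,
      Nat.not_odd_iff_even]
    have hdart : edgeSum (Finsupp.single ⟨(u, w), huw⟩ 1) =
        Finsupp.single u 1 + Finsupp.single w 1 := by
      rw [edgeSum_single, one_smul, dartExp]
    refine ⟨fun h => ?_, fun h => ?_⟩
    · obtain ⟨S, T, hc, he⟩ := ih.2 h
      refine ⟨T, S + Finsupp.single ⟨(u, w), huw⟩ 1, by simp [hc], ?_⟩
      rw [map_add, hdart, ← he]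
      abel
    · obtain ⟨S, T, hc, he⟩ := ih.1 h
      refine ⟨T, S + Finsupp.single ⟨(u, w), huw⟩ 1, by simp [hc], ?_⟩
      rw [map_add, hdart, add_assoc, ← he]
      abel

lemma eventually_lt_edgeOrder_of_odd_walk {u v : V} (p : G.Walk u v) (hp : Odd p.length) :
    ∀ᶠ S : G.Dart →₀ ℕ in Filter.atTop,
      S.degree < edgeOrder G (Finsupp.single u 1 + Finsupp.single v 1 + edgeSum S) := by
  obtain ⟨S₀, T, hT, hST⟩ := (exists_edgeSum_of_walk p).2 hp
  filter_upwards [Filter.eventually_ge_atTop S₀] with S hS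
  obtain ⟨U, rfl⟩ := le_iff_exists_add.mp hS
  refine le_edgeOrder_iff.mpr ⟨T + U, ?_, ?_⟩
  · rw [map_add, map_add, hT, Nat.succ_eq_add_one, add_right_comm]
  · rw [map_add, map_add, ← hST, add_assoc]

variable (G) in
/-- The vertices joined by a walk of odd length to the root `l.out` of their component `l`. They
form one side of a bipartite component and all of a non-bipartite one. Their variables generate the
colon ideal that attains the v-number. -/
def oddVertices : Set V :=
  {v | ∃ p : G.Walk (G.connectedComponentMk v).out v, Odd p.length}

variable (G) in
/-- The vertices joined by a walk of even length to the root `l.out` of their component `l`. -/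
def evenVertices : Set V :=
  {v | ∃ p : G.Walk (G.connectedComponentMk v).out v, Even p.length}

lemma mem_evenVertices_of_adj {u v : V} (h : G.Adj u v) (hu : u ∈ oddVertices G) :
    v ∈ evenVertices G := by
  obtain ⟨p, hp⟩ := hu
  rw [evenVertices, Set.mem_ofPred_eq, ← SimpleGraph.ConnectedComponent.sound h.reachable]
  exact ⟨p.concat h, by simpa [Nat.even_add_one] using hp⟩

lemma mem_oddVertices_of_adj {u v : V} (h : G.Adj u v) (hu : u ∈ evenVertices G) :
    v ∈ oddVertices G := by
  obtain ⟨p, hp⟩ := hu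
  rw [oddVertices, Set.mem_ofPred_eq, ← SimpleGraph.ConnectedComponent.sound h.reachable]
  exact ⟨p.concat h, by simpa [Nat.odd_add_one] using hp⟩

lemma mem_evenVertices_of_notMem_oddVertices {v : V} (h : v ∉ oddVertices G) :
    v ∈ evenVertices G := by
  obtain ⟨p⟩ : G.Reachable (G.connectedComponentMk v).out v :=
    SimpleGraph.ConnectedComponent.exact (Quot.out_eq _)
  exact ⟨p, Nat.not_odd_iff_even.mp fun hp => h ⟨p, hp⟩⟩

lemma out_mem_evenVertices (l : G.ConnectedComponent) : l.out ∈ evenVertices G := by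
  rw [evenVertices, Set.mem_ofPred_eq,
    show G.connectedComponentMk l.out = l from Quot.out_eq l]
  exact ⟨.nil, by simp⟩

variable (G) in
open scoped Classical in
/-- The weighting `[v odd] + [v not even]` of the vertices: `1` on a non-bipartite component, and
`0` and `2` on the two sides of a bipartite one. It bounds edge orders from above. -/
def parityWeight (v : V) : ℕ :=
  (if v ∈ oddVertices G then 1 else 0) + (if v ∈ evenVertices G then 0 else 1)

lemma parityWeight_add_of_adj {u v : V} (h : G.Adj u v) :
    parityWeight G u + parityWeight G v = 2 := by
  have h₁ : u ∈ oddVertices G ↔ v ∈ evenVertices G :=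
    ⟨mem_evenVertices_of_adj h, mem_oddVertices_of_adj h.symm⟩
  have h₂ : u ∈ evenVertices G ↔ v ∈ oddVertices G :=
    ⟨mem_oddVertices_of_adj h, mem_evenVertices_of_adj h.symm⟩
  unfold parityWeight
  split_ifs <;> tauto

lemma parityWeight_eq_zero {v : V} (h : v ∉ oddVertices G) : parityWeight G v = 0 := by
  simp [parityWeight, h, mem_evenVertices_of_notMem_oddVertices h]

lemma parityWeight_out_le_one (l : G.ConnectedComponent) : parityWeight G l.out ≤ 1 := by
  rw [parityWeight, if_pos (out_mem_evenVertices l)]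
  split_ifs <;> simp

variable [Fintype G.ConnectedComponent]

variable (G) in
/-- The exponent vector of the product of the roots `l.out` of the components `l`. Its product with
suitable edges attains the v-number. -/
def rootExp : V →₀ ℕ :=
  ∑ l : G.ConnectedComponent, Finsupp.single l.out 1

lemma degree_rootExp : (rootExp G).degree = Fintype.card G.ConnectedComponent := by
  simp [rootExp]

lemma compPart_rootExp (l : G.ConnectedComponent) :
    compPart l (rootExp G) = Finsupp.single l.out 1 := by
  have hout (m : G.ConnectedComponent) : G.connectedComponentMk m.out = m := Quot.out_eq m
  rw [rootExp, map_sum, Finset.sum_eq_single l]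
  · exact compPart_single (hout l) 1
  · exact fun m _ hm => compPart_single_of_ne ((hout m).trans_ne hm) 1
  · simp

lemma weight_parityWeight_compPart_add_rootExp_le {b : V →₀ ℕ} (hb : ∀ v ∈ oddVertices G, b v = 0)
    (l : G.ConnectedComponent) :
    Finsupp.weight (parityWeight G) (compPart l (b + rootExp G)) ≤ 1 := by
  have hb₀ : Finsupp.weight (parityWeight G) (compPart l b) = 0 := by
    rw [Finsupp.weight_apply]
    refine Finset.sum_eq_zero fun v _ => smul_eq_zero.mpr ?_
    by_cases hv : v ∈ oddVertices G
    · exact .inl (compPart_apply_eq_zero (hb v hv) l)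
    · exact .inr (parityWeight_eq_zero hv)
  rw [map_add, map_add, hb₀, zero_add, compPart_rootExp, Finsupp.weight_single, one_smul]
  exact parityWeight_out_le_one l

lemma edgeOrder_add_rootExp_add_edgeSum_le {b : V →₀ ℕ} (hb : ∀ v ∈ oddVertices G, b v = 0)
    (S : G.Dart →₀ ℕ) : edgeOrder G (b + (rootExp G + edgeSum S)) ≤ S.degree := by
  rw [← add_assoc]
  exact edgeOrder_add_edgeSum_le (fun _ _ => parityWeight_add_of_adj)
    (weight_parityWeight_compPart_add_rootExp_le hb) S

lemma eventually_lt_edgeOrder_single_add [Finite V] : ∀ᶠ S : G.Dart →₀ ℕ in Filter.atTop,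
    ∀ v ∈ oddVertices G, S.degree < edgeOrder G (Finsupp.single v 1 + (rootExp G + edgeSum S)) := by
  rw [Filter.eventually_all]
  intro v
  by_cases hv : v ∈ oddVertices G
  · obtain ⟨p, hp⟩ := hv
    filter_upwards [eventually_lt_edgeOrder_of_odd_walk p hp] with S hS _
    refine hS.trans_le (edgeOrder_mono ?_)
    rw [add_comm (Finsupp.single _ 1), add_assoc]
    gcongr
    exact Finset.single_le_sum (f := fun l : G.ConnectedComponent => Finsupp.single l.out 1)
      (fun _ _ => zero_le) (Finset.mem_univ _)
  · exact Filter.Eventually.of_forall fun _ h => absurd h hv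

lemma exists_degree_eq_of_eventually_atTop {ι : Type*} [Nonempty ι] {P : (ι →₀ ℕ) → Prop}
    (h : ∀ᶠ S in Filter.atTop, P S) : ∃ k₀, ∀ k ≥ k₀, ∃ S : ι →₀ ℕ, S.degree = k ∧ P S := by
  obtain ⟨S₀, hS₀⟩ := Filter.eventually_atTop.mp h
  refine ⟨S₀.degree, fun k hk => ⟨S₀ + Finsupp.single (Classical.arbitrary ι) (k - S₀.degree), ?_,
    hS₀ _ le_self_add⟩⟩
  rw [map_add, Finsupp.degree_single, Nat.add_sub_cancel' hk]

end OddWalks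

section MonomialIdeals

variable {σ R : Type*}

lemma span_range_monomial_pow [CommSemiring R] {ι : Type*} (e : ι → σ →₀ ℕ) (k : ℕ) :
    Ideal.span (Set.range fun i => monomial (e i) (1 : R)) ^ k =
      Ideal.span ((fun a => monomial a (1 : R)) ''
        (Finsupp.linearCombination ℕ e '' {T | T.degree = k})) := by
  rw [Ideal.span, Submodule.span_pow, ← Set.image_univ, Finsupp.image_pow_eq_finsuppProd_image,
    Set.image_image]
  simp [monomial_pow, Finsupp.linearCombination_apply, monomial_finsupp_sum_index]

lemma isPrime_span_X_image [CommRing R] [IsDomain R] (P : Set σ) :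
    (Ideal.span (X '' P : Set (MvPolynomial σ R))).IsPrime := by
  classical
  let J : Ideal (MvPolynomial σ R) := Ideal.span (X '' P)
  let φ : MvPolynomial σ R →ₐ[R] MvPolynomial σ R := aeval fun i => if i ∈ P then 0 else X i
  have hφ : (Ideal.Quotient.mkₐ R J).comp φ = Ideal.Quotient.mkₐ R J := by
    ext i
    by_cases hi : i ∈ P
    · have : Ideal.Quotient.mk J (X i) = 0 :=
        Ideal.Quotient.eq_zero_iff_mem.mpr (Ideal.subset_span ⟨i, hi, rfl⟩)
      simp [φ, hi, this]
    · simp [φ, hi]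
  have hker : J = RingHom.ker φ := by
    apply le_antisymm
    · rw [Ideal.span_le]
      rintro _ ⟨i, hi, rfl⟩
      simp [φ, RingHom.mem_ker, hi]
    · intro g hg
      have h := DFunLike.congr_fun hφ g
      rw [AlgHom.comp_apply, show φ g = 0 from hg, map_zero] at h
      exact Ideal.Quotient.eq_zero_iff_mem.mp h.symm
  change J.IsPrime
  rw [hker]
  exact RingHom.ker_isPrime _

end MonomialIdeals

section VNumber

lemma mem_assOf_of_colon_eq {A : Type} [CommRing A] [IsNoetherianRing A] {L p : Ideal A}
    (hp : p.IsPrime) {f : A} (h : L.colon (Ideal.span {f}) = p) : p ∈ assOf L := by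
  refine isAssociatedPrime_iff.mpr ⟨hp, Ideal.Quotient.mk L f, ?_⟩
  ext g
  rw [← h, Ideal.mem_colon_span_singleton, Submodule.mem_colon_singleton, Submodule.mem_bot]
  exact Ideal.Quotient.eq_zero_iff_mem.symm

lemma vnumber_eq_of_isPrime_colon {σ K : Type} [Field K] [Finite σ]
    {L : Ideal (MvPolynomial σ K)} {d : ℕ} {f : MvPolynomial σ K} (hf : f.IsHomogeneous d)
    (hp : (L.colon (Ideal.span {f})).IsPrime)
    (hmin : ∀ (e : ℕ) (g : MvPolynomial σ K), g.IsHomogeneous e →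
      (L.colon (Ideal.span {g})).IsPrime → d ≤ e) : vnumber L = d := by
  refine IsLeast.csInf_eq ⟨⟨_, mem_assOf_of_colon_eq hp rfl, f, hf, rfl⟩, ?_⟩
  rintro e ⟨p, hpL, g, hg, rfl⟩
  exact hmin e g hg hpL.isPrime

end VNumber

section EdgeIdeal

variable {σ R : Type*} [CommSemiring R] {G : SimpleGraph σ} {k : ℕ}

variable (R G) in
/-- The edge ideal `I(G)` of a graph. -/
def edgeIdeal : Ideal (MvPolynomial σ R) :=
  Ideal.span {f | ∃ i j, G.Adj i j ∧ f = X i * X j}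

variable (R G) in
lemma edgeIdeal_eq_span_range :
    edgeIdeal R G = Ideal.span (Set.range fun d : G.Dart => monomial (dartExp d) 1) := by
  have hmul (i j : σ) : (X i * X j : MvPolynomial σ R) =
      monomial (Finsupp.single i 1 + Finsupp.single j 1) 1 := by
    rw [X, X, monomial_mul, one_mul]
  rw [edgeIdeal]
  congr 1
  ext f
  simp only [hmul]
  constructor
  · rintro ⟨i, j, hij, rfl⟩
    exact ⟨⟨(i, j), hij⟩, rfl⟩
  · rintro ⟨d, rfl⟩
    exact ⟨d.fst, d.snd, d.adj, rfl⟩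

lemma mem_edgeIdeal_pow {f : MvPolynomial σ R} :
    f ∈ edgeIdeal R G ^ k ↔ ∀ a ∈ f.support, k ≤ edgeOrder G a := by
  rw [edgeIdeal_eq_span_range, span_range_monomial_pow, mem_ideal_span_monomial_image]
  simp [le_edgeOrder_iff, edgeSum]

lemma colon_edgeIdeal_pow_monomial {P : Set σ} {a : σ →₀ ℕ}
    (hP : ∀ v ∈ P, k ≤ edgeOrder G (Finsupp.single v 1 + a))
    (hPc : ∀ b : σ →₀ ℕ, (∀ v ∈ P, b v = 0) → edgeOrder G (b + a) < k) :
    (edgeIdeal R G ^ k).colon (Ideal.span {monomial a (1 : R)}) = Ideal.span (X '' P) := by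
  apply le_antisymm
  · intro g hg
    rw [Ideal.mem_colon_span_singleton, mem_edgeIdeal_pow] at hg
    rw [mem_ideal_span_X_image]
    intro b hb
    by_contra! h
    refine (hPc b h).not_ge (hg _ ?_)
    rw [mem_support_iff, coeff_mul_monomial, mul_one]
    exact mem_support_iff.mp hb
  · rw [Ideal.span_le]
    rintro _ ⟨v, hv, rfl⟩
    rw [SetLike.mem_coe, Ideal.mem_colon_span_singleton, mem_edgeIdeal_pow, X, monomial_mul,
      one_mul]
    intro b hb
    rw [Finset.mem_singleton.mp (support_monomial_subset hb)]
    exact hP v hv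

lemma exists_X_mem_of_edgeIdeal_le (hiso : ∀ v, ∃ w, G.Adj v w) {p : Ideal (MvPolynomial σ R)}
    (hp : p.IsPrime) (hle : edgeIdeal R G ≤ p) (l : G.ConnectedComponent) :
    ∃ v, G.connectedComponentMk v = l ∧ X v ∈ p := by
  induction l using SimpleGraph.ConnectedComponent.ind with | _ u
  obtain ⟨w, huw⟩ := hiso u
  rcases hp.mem_or_mem (hle (Ideal.subset_span ⟨u, w, huw, rfl⟩)) with h | h
  · exact ⟨u, rfl, h⟩
  · exact ⟨w, SimpleGraph.ConnectedComponent.sound huw.symm.reachable, h⟩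

lemma le_degree_of_isPrime_colon_edgeIdeal_pow [Fintype G.ConnectedComponent] [Nonempty σ]
    (hiso : ∀ v, ∃ w, G.Adj v w) {f : MvPolynomial σ R} {d : ℕ} (hf : f.IsHomogeneous d)
    (hp : ((edgeIdeal R G ^ k).colon (Ideal.span {f})).IsPrime) :
    2 * k + Fintype.card G.ConnectedComponent ≤ d + 2 := by
  have hfk : f ∉ edgeIdeal R G ^ k := fun h => hp.ne_top <| by
    rwa [Ideal.eq_top_iff_one, Ideal.mem_colon_span_singleton, one_mul]
  rw [mem_edgeIdeal_pow] at hfk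
  push Not at hfk
  obtain ⟨a, ha, hak⟩ := hfk
  have hvar (l : G.ConnectedComponent) : ∃ v, G.connectedComponentMk v = l ∧
      k ≤ edgeOrder G (Finsupp.single v 1 + a) := by
    obtain ⟨v, hv, hvf⟩ :=
      exists_X_mem_of_edgeIdeal_le hiso hp (hp.le_of_pow_le Ideal.le_colon) l
    rw [Ideal.mem_colon_span_singleton, mem_edgeIdeal_pow] at hvf
    refine ⟨v, hv, hvf _ ?_⟩
    rw [mem_support_iff, coeff_X_mul]
    exact mem_support_iff.mp ha
  have hk : k ≤ edgeOrder G a + 1 := by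
    obtain ⟨v, -, hv⟩ := hvar (G.connectedComponentMk (Classical.arbitrary σ))
    exact hv.trans (edgeOrder_single_add_le v a)
  have hdeg : a.degree = d := by
    by_contra h
    exact mem_support_iff.mp ha (hf.coeff_eq_zero h)
  have := two_mul_edgeOrder_add_card_le_degree fun l =>
    (hvar l).imp fun v hv => ⟨hv.1, hak.trans_le hv.2⟩
  lia

end EdgeIdeal

theorem stmt12_general {σ K : Type} [Finite σ] [Nonempty σ] [Field K] (G : SimpleGraph σ)
    (hiso : ∀ v, ∃ w, G.Adj v w) : ∃ k₀ : ℕ, ∀ k : ℕ, k₀ ≤ k →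
      (vnumber (edgeIdeal K G ^ k) : ℤ) = 2 * k + ((Nat.card G.ConnectedComponent : ℤ) - 2) := by
  have := Fintype.ofFinite G.ConnectedComponent
  obtain ⟨w, hw⟩ := hiso (Classical.arbitrary σ)
  have : Nonempty G.Dart := ⟨⟨(_, w), hw⟩⟩
  obtain ⟨k₀, hk₀⟩ :=
    exists_degree_eq_of_eventually_atTop (eventually_lt_edgeOrder_single_add (G := G))
  refine ⟨k₀ + 1, fun k hk => ?_⟩
  obtain ⟨m, rfl⟩ : ∃ m, k = m + 1 := ⟨k - 1, by lia⟩
  obtain ⟨S, rfl, hS⟩ := hk₀ m (by lia)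
  have hcolon := colon_edgeIdeal_pow_monomial (R := K) hS fun b hb =>
    Nat.lt_succ_of_le (edgeOrder_add_rootExp_add_edgeSum_le hb S)
  have hdeg : (rootExp G + edgeSum S).degree =
      2 * S.degree + Fintype.card G.ConnectedComponent := by
    rw [map_add, degree_rootExp, degree_edgeSum, add_comm]
  have hv := vnumber_eq_of_isPrime_colon (isHomogeneous_monomial (1 : K) hdeg)
    (hcolon ▸ isPrime_span_X_image (oddVertices G)) fun e g hg hp => by
      have := le_degree_of_isPrime_colon_edgeIdeal_pow hiso hg hp
      lia
  rw [hv, Nat.card_eq_fintype_card]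
  push_cast
  ring

/-- Corollary 5.4: let `G` be a finite simple graph on `{x_1,…,x_n}`
(`n ≥ 1`) without isolated vertices, with `c(G)` connected components, and let `I(G)` be its
edge ideal.  Then `v(I(G)^k) = 2k + (c(G) − 2)` for all `k ≫ 0`. -/
theorem stmt12 {K : Type} [Field K] {n : ℕ} (hn : 1 ≤ n)
    (G : SimpleGraph (Fin n)) (hiso : ∀ v, ∃ w, G.Adj v w)
    (IG : Ideal (MvPolynomial (Fin n) K))
    (hIG : IG = Ideal.span
      {f : MvPolynomial (Fin n) K | ∃ i j : Fin n, G.Adj i j ∧ f = X i * X j}) :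
    ∃ k₀ : ℕ, ∀ k : ℕ, k₀ ≤ k →
      (vnumber (IG ^ k) : ℤ) = 2 * k + ((Nat.card G.ConnectedComponent : ℤ) - 2) := by
  subst hIG
  have : Nonempty (Fin n) := ⟨⟨0, hn⟩⟩
  exact stmt12_general G hiso
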